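/- Let r ≥ 4 be an integer, and let f ∈ L^r_{∞,∞} be non-constant. Set α = M_r(f), b = M_{r−1}(f)/M_r(f), and a = M_{r−2}(f)/M_{r−1}(f) − M_{r−1}(f)/(2·M_r(f)); then a ≥ 0 (this follows from Landau's inequality M_{r−1}(f)² ≤ 2·M_{r−2}(f)·M_r(f)). For β ≥ 0 let g_β = α·ψ_r(a,b,β). Then α, b > 0, and for every β ≥ 0 one has M_{r−2}(g_β) = M_{r−2}(f), M_{r−1}(g_β) = M_{r−1}(f) and M_r(g_β) = M_r(f); moreover, for every integer s with 0 ≤ s < r−2, the function β ↦ M_s(g_β) is continuous, increasing, and tends to ∞ as β → ∞. -/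

import Mathlib

open MeasureTheory Filter

noncomputable section

/-- The uniform norm `‖f‖ = sup_{t ∈ ℝ} |f t|` of a function `f : ℝ → ℝ`. -/
def unif (f : ℝ → ℝ) : ℝ := ⨆ t : ℝ, |f t|

/-- `M k f = ‖f⁽ᵏ⁾‖`, the uniform norm of the `k`-th derivative of `f`. -/
def M (k : ℕ) (f : ℝ → ℝ) : ℝ := unif (iteratedDeriv k f)

/-- The class `L^r_{∞,∞}`: bounded functions `f : ℝ → ℝ` having `r-1` (continuous)
derivatives, with `f⁽ʳ⁻¹⁾` locally absolutely continuous and `f⁽ʳ⁾` essentially bounded;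
the last two conditions are equivalent to `f⁽ʳ⁻¹⁾` being Lipschitz. -/
def MemL (r : ℕ) (f : ℝ → ℝ) : Prop :=
  Continuous f ∧ (∃ C : ℝ, ∀ t : ℝ, |f t| ≤ C) ∧ ContDiff ℝ (r - 1 : ℕ) f ∧
    ∃ K : NNReal, LipschitzWith K (iteratedDeriv (r - 1) f)

/-- The Euler perfect spline `φ_r`: the `r`-th `2π`-periodic antiderivative with zero
mean value of `t ↦ sgn (sin t)`. -/
def eulerPhi : ℕ → ℝ → ℝ
  | 0 => fun t => Real.sign (Real.sin t)
  | (s + 1) => fun t =>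
      (∫ x in (0:ℝ)..t, eulerPhi s x) -
        (1 / (2 * Real.pi)) * ∫ x in (0:ℝ)..(2 * Real.pi), ∫ u in (0:ℝ)..x, eulerPhi s u

/-- `φ_{λ,r}(t) = λ^{-r} φ_r (λ t)`. -/
def eulerPhiL (lam : ℝ) (r : ℕ) (t : ℝ) : ℝ := lam ^ (-(r : ℤ)) * eulerPhi r (lam * t)

/-- The basic step function: `0` on `[0,a]`, `1` on `(a, a+b]`, `0` after `a+b`. -/
def psiBase (a b : ℝ) (t : ℝ) : ℝ := if t ≤ a then 0 else if t ≤ a + b then 1 else 0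

/-- `psiBase` continued evenly with respect to the point `a+b+c`. -/
def psiHalf (a b c t : ℝ) : ℝ :=
  if t ≤ a + b + c then psiBase a b t else psiBase a b (2 * (a + b + c) - t)

/-- The Rodov step function `ψ_0(a,b,c)`: equal to `psiBase` on `[0, a+b+c]`, continued
evenly with respect to `a+b+c`, then oddly with respect to `2(a+b+c)`, then
`4(a+b+c)`-periodically. -/
def psiZero (a b c t : ℝ) : ℝ :=
  if (t - 4 * (a + b + c) * ⌊t / (4 * (a + b + c))⌋) ≤ 2 * (a + b + c) then
    psiHalf a b c (t - 4 * (a + b + c) * ⌊t / (4 * (a + b + c))⌋)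
  else
    -psiHalf a b c (4 * (a + b + c) - (t - 4 * (a + b + c) * ⌊t / (4 * (a + b + c))⌋))

/-- `ψ_s(a,b,c)`: the `s`-th periodic antiderivative of `ψ_0(a,b,c)` with zero mean
value over the period `[0, 4(a+b+c)]`. -/
def psi : ℕ → ℝ → ℝ → ℝ → ℝ → ℝ
  | 0 => psiZero
  | (s + 1) => fun a b c t =>
      (∫ x in (0:ℝ)..t, psi s a b c x) -
        (1 / (4 * (a + b + c))) *
          ∫ x in (0:ℝ)..(4 * (a + b + c)), ∫ u in (0:ℝ)..x, psi s a b c u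

/-- The modulus of continuity `ω(D^k, X; δ) = sup {‖f⁽ᵏ⁾‖ : f ∈ X, ‖f‖ ≤ δ}` of the
differentiation operator `D^k` on a class `X`. -/
def omegaMod (k : ℕ) (X : Set (ℝ → ℝ)) (δ : ℝ) : ℝ :=
  sSup {y : ℝ | ∃ f ∈ X, M 0 f ≤ δ ∧ M k f = y}

end


lemma psiZero_periodic (a b c : ℝ) (hL : 0 < a + b + c) (t : ℝ) :
    psiZero a b c (t + 4 * (a + b + c)) = psiZero a b c t := by
  have h : (t + 4 * (a + b + c)) / (4 * (a + b + c)) = t / (4 * (a + b + c)) + 1 := by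
    field_simp
  have h2 : t + 4 * (a + b + c) - 4 * (a + b + c) * ((⌊t / (4 * (a + b + c))⌋ + 1 : ℤ) : ℝ)
      = t - 4 * (a + b + c) * ⌊t / (4 * (a + b + c))⌋ := by push_cast; ring
  unfold psiZero
  rw [h, Int.floor_add_one, h2]

lemma psiZero_periodic_int (a b c : ℝ) (hL : 0 < a + b + c) (n : ℤ) (t : ℝ) :
    psiZero a b c (t + n * (4 * (a + b + c))) = psiZero a b c t :=
  (show Function.Periodic (psiZero a b c) (4 * (a + b + c)) from
    psiZero_periodic a b c hL).int_mul n t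

lemma psiZero_eq (a b c : ℝ) (t : ℝ) (h0 : 0 ≤ t) (h1 : t < 4 * (a + b + c)) :
    psiZero a b c t = if t ≤ 2 * (a + b + c) then psiHalf a b c t else
      - psiHalf a b c (4 * (a + b + c) - t) := by
  have : ⌊t / (4 * (a + b + c))⌋ = 0 := by
    rw [Int.floor_eq_zero_iff]
    exact ⟨by apply div_nonneg h0; linarith, by rw [div_lt_one (by linarith)]; exact h1⟩
  unfold psiZero
  rw [this]; simp

lemma psiHalf_refl (a b c t : ℝ) : psiHalf a b c (2 * (a + b + c) - t) = psiHalf a b c t := by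
  unfold psiHalf
  split_ifs with h1 h2 h2
  · have : t = a + b + c := by linarith
    subst this; congr 1; ring
  · rfl
  · congr 1; ring
  · linarith

lemma exists_red (P : ℝ) (hP : 0 < P) (t : ℝ) : ∃ n : ℤ, ∃ u, 0 ≤ u ∧ u < P ∧ t = u + n * P := by
  refine ⟨⌊t / P⌋, t - ⌊t / P⌋ * P, ?_, ?_, by ring⟩
  · have := Int.floor_le (t / P)
    rw [le_div_iff₀ hP] at this; linarith
  · have := Int.lt_floor_add_one (t / P)
    rw [div_lt_iff₀ hP] at this; linarith

lemma psiZero_odd (a b c : ℝ) (ha : 0 ≤ a) (hL : 0 < a + b + c) (t : ℝ) :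
    psiZero a b c (-t) = - psiZero a b c t := by
  obtain ⟨n, u, h0, h1, rfl⟩ := exists_red (4 * (a + b + c)) (by linarith) t
  rw [psiZero_periodic_int a b c hL]
  have h2 : -(u + n * (4 * (a + b + c))) = -u + (-n : ℤ) * (4 * (a + b + c)) := by
    push_cast; ring
  rw [h2, psiZero_periodic_int a b c hL]
  have hz : psiHalf a b c 0 = 0 := by
    unfold psiHalf psiBase; rw [if_pos hL.le, if_pos ha]
  rcases h0.eq_or_lt with rfl | h0
  · rw [neg_zero, psiZero_eq a b c 0 le_rfl h1, if_pos (by linarith), hz]; simp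
  · rw [← psiZero_periodic a b c hL, psiZero_eq a b c _ (by linarith) (by linarith),
      psiZero_eq a b c u h0.le h1]
    split_ifs with h3 h4 h4
    · have : u = 2 * (a + b + c) := by linarith
      have h5 : psiHalf a b c u = 0 := by
        rw [← psiHalf_refl, this, sub_self, hz]
      have h6 : -u + 4 * (a + b + c) = u := by linarith
      rw [h6, h5]; simp
    · rw [neg_neg]; congr 1; ring
    · congr 2; ring
    · linarith

lemma psiZero_refl (a b c : ℝ) (hL : 0 < a + b + c) (t : ℝ) :
    psiZero a b c (2 * (a + b + c) - t) = psiZero a b c t := by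
  obtain ⟨n, u, h0, h1, rfl⟩ := exists_red (4 * (a + b + c)) (by linarith) t
  rw [psiZero_periodic_int a b c hL]
  have h2 : 2 * (a + b + c) - (u + n * (4 * (a + b + c)))
      = 2 * (a + b + c) - u + (-n : ℤ) * (4 * (a + b + c)) := by
    push_cast; ring
  rw [h2, psiZero_periodic_int a b c hL, psiZero_eq a b c u h0 h1]
  split_ifs with h3
  · rw [psiZero_eq a b c _ (by linarith) (by linarith), if_pos (by linarith), psiHalf_refl]
  · rw [← psiZero_periodic a b c hL, psiZero_eq a b c _ (by linarith) (by linarith),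
      if_neg (by linarith), ← psiHalf_refl]
    congr 2; ring

lemma psiBase_meas (a b : ℝ) : Measurable (psiBase a b) := by
  unfold psiBase
  refine Measurable.ite measurableSet_Iic measurable_const
    (Measurable.ite measurableSet_Iic measurable_const measurable_const)

lemma psiHalf_meas (a b c : ℝ) : Measurable (psiHalf a b c) := by
  unfold psiHalf
  refine Measurable.ite measurableSet_Iic (psiBase_meas a b)
    ((psiBase_meas a b).comp (by fun_prop))

lemma psiZero_meas (a b c : ℝ) : Measurable (psiZero a b c) := by
  have h : Measurable (fun t : ℝ => t - 4 * (a + b + c) * (⌊t / (4 * (a + b + c))⌋ : ℝ)) := by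
    fun_prop
  unfold psiZero
  refine Measurable.ite (measurableSet_le h measurable_const) ((psiHalf_meas a b c).comp h)
    (((psiHalf_meas a b c).comp (measurable_const.sub h)).neg)

lemma psiBase_bd (a b t : ℝ) : 0 ≤ psiBase a b t ∧ psiBase a b t ≤ 1 := by
  unfold psiBase; split_ifs <;> norm_num

lemma psiZero_bd (a b c t : ℝ) : |psiZero a b c t| ≤ 1 := by
  have h : ∀ t, |psiHalf a b c t| ≤ 1 := by
    intro t; unfold psiHalf
    split_ifs <;> (rw [abs_of_nonneg (psiBase_bd _ _ _).1]; exact (psiBase_bd _ _ _).2)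
  unfold psiZero; split_ifs
  · exact h _
  · rw [abs_neg]; exact h _

lemma ii_of_bd (f : ℝ → ℝ) (hf : Measurable f) (h : ∀ t, |f t| ≤ 1) (x y : ℝ) :
    IntervalIntegrable f volume x y := by
  refine (intervalIntegrable_const (c := (1:ℝ))).mono_fun hf.aestronglyMeasurable ?_
  filter_upwards with t
  simpa using h t

lemma psi_ii (s : ℕ) (a b c : ℝ) : ∀ x y, IntervalIntegrable (psi s a b c) volume x y := by
  induction s with
  | zero => exact ii_of_bd _ (psiZero_meas a b c) (psiZero_bd a b c)
  | succ s ih =>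
    intro x y
    apply Continuous.intervalIntegrable
    simp only [psi]
    exact (intervalIntegral.continuous_primitive ih 0).sub continuous_const

lemma psi_cont (s : ℕ) (a b c : ℝ) : Continuous (psi (s + 1) a b c) := by
  simp only [psi]
  exact (intervalIntegral.continuous_primitive (psi_ii s a b c) 0).sub continuous_const

lemma mean_zero (J : ℝ → ℝ) (L : ℝ) (hJ : Continuous J) (h : ∀ x, J (x + 2 * L) = - J x) :
    ∫ x in (0:ℝ)..(4 * L), J x = 0 := by
  have h1 : ∫ x in (0:ℝ)..(2 * L), J (x + 2 * L) = ∫ x in (2 * L)..(4 * L), J x := by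
    rw [intervalIntegral.integral_comp_add_right]; congr 1 <;> ring
  rw [← intervalIntegral.integral_add_adjacent_intervals (hJ.intervalIntegrable 0 (2 * L))
    (hJ.intervalIntegrable _ _), ← h1]
  simp [h]

lemma step_even (a b c : ℝ) (hL : 0 < a + b + c) (s : ℕ)
    (h1 : ∀ t, psi s a b c (-t) = - psi s a b c t)
    (h2 : ∀ t, psi s a b c (2 * (a + b + c) - t) = psi s a b c t) :
    (∀ t, psi (s + 1) a b c t = ∫ x in (a + b + c)..t, psi s a b c x) ∧
    (∀ t, psi (s + 1) a b c (-t) = psi (s + 1) a b c t) ∧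
    (∀ t, psi (s + 1) a b c (2 * (a + b + c) - t) = - psi (s + 1) a b c t) := by
  set L := a + b + c with hLdef
  have ii := psi_ii s a b c
  set p := psi s a b c with hp
  have hI1 : ∀ t, ∫ x in (0:ℝ)..(-t), p x = ∫ x in (0:ℝ)..t, p x := by
    intro t
    have := intervalIntegral.integral_comp_neg (a := 0) (b := t) p
    rw [intervalIntegral.integral_congr (fun x _ => h1 x)] at this
    rw [intervalIntegral.integral_neg] at this
    rw [intervalIntegral.integral_symm, ← neg_zero, ← this]; simp
  have hsub : ∀ x y z, ∫ u in x..y, p u = (∫ u in z..y, p u) - ∫ u in z..x, p u := by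
    intro x y z
    rw [intervalIntegral.integral_interval_sub_left (ii _ _) (ii _ _)]
  have hJ2 : ∀ t, ∫ x in L..(2 * L - t), p x = - ∫ x in L..t, p x := by
    intro t
    have := intervalIntegral.integral_comp_sub_left (a := L) (b := t) p (2 * L)
    rw [intervalIntegral.integral_congr (fun x _ => h2 x)] at this
    rw [intervalIntegral.integral_symm, this]; congr 2; ring
  have hJ1 : ∀ t, ∫ x in L..(-t), p x = ∫ x in L..t, p x := by
    intro t
    rw [hsub L (-t) 0, hsub L t 0, hI1]
  have hJc : Continuous (fun t => ∫ x in L..t, p x) := intervalIntegral.continuous_primitive ii L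
  have hm := mean_zero (fun t => ∫ x in L..t, p x) L hJc (by
    intro x
    have := hJ2 (-x)
    rw [hJ1] at this
    rw [← this]; congr 1; ring)
  have key : ∀ t, psi (s + 1) a b c t = ∫ x in L..t, p x := by
    intro t
    simp only [psi]
    rw [← hLdef, ← hp]
    have e : ∀ x, ∫ u in (0:ℝ)..x, p u = (∫ u in L..x, p u) + ∫ u in (0:ℝ)..L, p u := by
      intro x; rw [hsub L x 0]; ring
    rw [intervalIntegral.integral_congr (fun x _ => e x),
      intervalIntegral.integral_add (hJc.intervalIntegrable _ _) (by simp), hm, e t]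
    simp only [intervalIntegral.integral_const, smul_eq_mul]
    field_simp
    ring
  exact ⟨key, fun t => by rw [key, key, hJ1], fun t => by rw [key, key, hJ2]⟩

lemma step_odd (a b c : ℝ) (s : ℕ)
    (h1 : ∀ t, psi s a b c (-t) = psi s a b c t)
    (h2 : ∀ t, psi s a b c (2 * (a + b + c) - t) = - psi s a b c t) :
    (∀ t, psi (s + 1) a b c t = ∫ x in (0:ℝ)..t, psi s a b c x) ∧
    (∀ t, psi (s + 1) a b c (-t) = - psi (s + 1) a b c t) ∧
    (∀ t, psi (s + 1) a b c (2 * (a + b + c) - t) = psi (s + 1) a b c t) := by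
  set L := a + b + c with hLdef
  have ii := psi_ii s a b c
  set p := psi s a b c with hp
  have hI1 : ∀ t, ∫ x in (0:ℝ)..(-t), p x = - ∫ x in (0:ℝ)..t, p x := by
    intro t
    have := intervalIntegral.integral_comp_neg (a := 0) (b := t) p
    rw [intervalIntegral.integral_congr (fun x _ => h1 x)] at this
    rw [intervalIntegral.integral_symm, this]; simp
  have hsub : ∀ x y z, ∫ u in x..y, p u = (∫ u in z..y, p u) - ∫ u in z..x, p u := by
    intro x y z
    rw [intervalIntegral.integral_interval_sub_left (ii _ _) (ii _ _)]
  have hJ2 : ∀ t, ∫ x in (0:ℝ)..(2 * L - t), p x = ∫ x in (0:ℝ)..t, p x := by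
    have aux : ∀ t, ∫ x in (2 * L - t)..(2 * L), p x = - ∫ x in (0:ℝ)..t, p x := by
      intro t
      have := intervalIntegral.integral_comp_sub_left (a := 0) (b := t) p (2 * L)
      rw [intervalIntegral.integral_congr (fun x _ => h2 x), intervalIntegral.integral_neg] at this
      rw [this]; simp
    have h0 := aux (2 * L)
    rw [sub_self] at h0
    intro t
    have := aux t
    rw [hsub (2 * L - t) (2 * L) 0] at this
    linarith
  have hJc : Continuous (fun t => ∫ x in (0:ℝ)..t, p x) := intervalIntegral.continuous_primitive ii 0
  have hm := mean_zero (fun t => ∫ x in (0:ℝ)..t, p x) L hJc (by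
    intro x
    have := hJ2 (-x)
    rw [hI1] at this
    rw [← this]; congr 1; ring)
  have key : ∀ t, psi (s + 1) a b c t = ∫ x in (0:ℝ)..t, p x := by
    intro t
    simp only [psi]
    rw [← hLdef, ← hp, hm]; simp
  exact ⟨key, fun t => by rw [key, key, hI1], fun t => by rw [key, key, hJ2]⟩

/-- Structure of `psi`. -/
lemma psi_sym (a b c : ℝ) (ha : 0 ≤ a) (hL : 0 < a + b + c) (s : ℕ) :
    (Even s → (∀ t, psi s a b c (-t) = - psi s a b c t) ∧
      (∀ t, psi s a b c (2 * (a + b + c) - t) = psi s a b c t)) ∧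
    (¬ Even s → (∀ t, psi s a b c (-t) = psi s a b c t) ∧
      (∀ t, psi s a b c (2 * (a + b + c) - t) = - psi s a b c t)) := by
  induction s with
  | zero =>
    exact ⟨fun _ => ⟨psiZero_odd a b c ha hL, psiZero_refl a b c hL⟩, fun h => by simp at h⟩
  | succ s ih =>
    constructor
    · intro h
      rw [Nat.even_add_one] at h
      exact (step_odd a b c s (ih.2 h).1 (ih.2 h).2).2
    · intro h
      rw [Nat.even_add_one, not_not] at h
      exact (step_even a b c hL s (ih.1 h).1 (ih.1 h).2).2

lemma psi_succ_even (a b c : ℝ) (ha : 0 ≤ a) (hL : 0 < a + b + c) (s : ℕ) (hs : Even s) (t : ℝ) :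
    psi (s + 1) a b c t = ∫ x in (a + b + c)..t, psi s a b c x :=
  have h := (psi_sym a b c ha hL s).1 hs
  (step_even a b c hL s h.1 h.2).1 t

lemma psi_succ_odd (a b c : ℝ) (ha : 0 ≤ a) (hL : 0 < a + b + c) (s : ℕ) (hs : ¬ Even s) (t : ℝ) :
    psi (s + 1) a b c t = ∫ x in (0:ℝ)..t, psi s a b c x :=
  have h := (psi_sym a b c ha hL s).2 hs
  (step_odd a b c s h.1 h.2).1 t

lemma psi_abs_red (a b c : ℝ) (ha : 0 ≤ a) (hL : 0 < a + b + c) (s : ℕ) (t : ℝ) :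
    ∃ u, 0 ≤ u ∧ u ≤ a + b + c ∧ |psi s a b c t| = |psi s a b c u| := by
  have h1 : ∀ t, |psi s a b c (-t)| = |psi s a b c t| := by
    intro t
    by_cases hs : Even s
    · rw [((psi_sym a b c ha hL s).1 hs).1, abs_neg]
    · rw [((psi_sym a b c ha hL s).2 hs).1]
  have h2 : ∀ t, |psi s a b c (2 * (a + b + c) - t)| = |psi s a b c t| := by
    intro t
    by_cases hs : Even s
    · rw [((psi_sym a b c ha hL s).1 hs).2]
    · rw [((psi_sym a b c ha hL s).2 hs).2, abs_neg]
  have hp : Function.Periodic (fun t => |psi s a b c t|) (2 * (a + b + c)) := by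
    intro t
    have := h2 (-t)
    rw [h1] at this
    simp only
    rw [← this]; congr 2; ring
  obtain ⟨n, u, h0, h3, rfl⟩ := exists_red (2 * (a + b + c)) (by linarith) t
  have h4 : |psi s a b c (u + n * (2 * (a + b + c)))| = |psi s a b c u| := hp.int_mul n u
  rw [h4]
  by_cases h5 : u ≤ a + b + c
  · exact ⟨u, h0, h5, rfl⟩
  · exact ⟨2 * (a + b + c) - u, by linarith, by linarith, (h2 u).symm⟩

noncomputable def UU (a b : ℝ) : ℕ → ℝ → ℝ → ℝ
  | 0, _ => psiBase a b
  | s + 1, c => fun t => if Even s then ∫ x in t..(a + b + c), UU a b s c x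
      else ∫ x in (0:ℝ)..t, UU a b s c x

noncomputable def NN (a b : ℝ) (s : ℕ) (c : ℝ) : ℝ := ∫ x in (0:ℝ)..(a + b + c), UU a b s c x

lemma UU_even (a b : ℝ) (s : ℕ) (hs : Even s) (c t : ℝ) :
    UU a b (s + 1) c t = ∫ x in t..(a + b + c), UU a b s c x := by
  simp [UU, hs]

lemma UU_odd (a b : ℝ) (s : ℕ) (hs : ¬ Even s) (c t : ℝ) :
    UU a b (s + 1) c t = ∫ x in (0:ℝ)..t, UU a b s c x := by
  simp [UU, hs]

lemma base_ii (a b x y : ℝ) : IntervalIntegrable (psiBase a b) volume x y :=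
  ii_of_bd _ (psiBase_meas a b) (fun t => by
    rw [abs_of_nonneg (psiBase_bd _ _ _).1]; exact (psiBase_bd _ _ _).2) _ _

lemma UU_jc (a b : ℝ) (s : ℕ) : Continuous (fun p : ℝ × ℝ => UU a b (s + 1) p.1 p.2) := by
  induction s with
  | zero =>
    have h : ∀ p : ℝ × ℝ, UU a b 1 p.1 p.2 = (∫ x in (0:ℝ)..(a + b + p.1), psiBase a b x)
        - ∫ x in (0:ℝ)..p.2, psiBase a b x := by
      intro p
      rw [intervalIntegral.integral_interval_sub_left (base_ii _ _ _ _) (base_ii _ _ _ _),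
        UU_even a b 0 (by simp)]
      rfl
    simp only [zero_add, h]
    have hc := intervalIntegral.continuous_primitive (base_ii a b) 0
    exact (hc.comp (by fun_prop)).sub (hc.comp continuous_snd)
  | succ s ih =>
    have hc : ∀ g : ℝ × ℝ → ℝ, Continuous g →
        Continuous (fun p : ℝ × ℝ => ∫ x in (0:ℝ)..g p, UU a b (s + 1) p.1 x) := by
      intro g hg
      apply intervalIntegral.continuous_parametric_intervalIntegral_of_continuous
      · exact ih.comp (by fun_prop : Continuous fun q : (ℝ × ℝ) × ℝ => (q.1.1, q.2))
      · exact hg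
    by_cases hs : Even (s + 1)
    · have h : ∀ p : ℝ × ℝ, UU a b (s + 1 + 1) p.1 p.2
          = (∫ x in (0:ℝ)..(a + b + p.1), UU a b (s + 1) p.1 x)
          - ∫ x in (0:ℝ)..p.2, UU a b (s + 1) p.1 x := by
        intro p
        have : Continuous (UU a b (s + 1) p.1) := ih.comp (by fun_prop : Continuous fun x : ℝ => (p.1, x))
        rw [intervalIntegral.integral_interval_sub_left (this.intervalIntegrable _ _)
          (this.intervalIntegrable _ _), UU_even a b _ hs]
      simp only [h]
      exact (hc _ (by fun_prop)).sub (hc _ (by fun_prop))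
    · simp only [UU_odd a b _ hs]
      exact hc _ (by fun_prop)

lemma UU_cont (a b : ℝ) (s : ℕ) (c : ℝ) : Continuous (UU a b (s + 1) c) :=
  (UU_jc a b s).comp (by fun_prop : Continuous fun x : ℝ => (c, x))

lemma UU_ii (a b : ℝ) (s : ℕ) (c x y : ℝ) : IntervalIntegrable (UU a b s c) volume x y := by
  cases s with
  | zero => exact base_ii a b x y
  | succ s => exact (UU_cont a b s c).intervalIntegrable _ _

lemma NN_cont (a b : ℝ) (s : ℕ) : Continuous (NN a b (s + 1)) := by
  unfold NN
  apply intervalIntegral.continuous_parametric_intervalIntegral_of_continuous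
  · exact UU_jc a b s
  · fun_prop

lemma UU_nonneg (a b : ℝ) (s : ℕ) (c t : ℝ) (h0 : 0 ≤ t) (h1 : t ≤ a + b + c) :
    0 ≤ UU a b s c t := by
  induction s generalizing t with
  | zero => exact (psiBase_bd _ _ _).1
  | succ s ih =>
    by_cases hs : Even s
    · rw [UU_even a b s hs]
      exact intervalIntegral.integral_nonneg h1 (fun u hu => ih u (h0.trans hu.1) hu.2)
    · rw [UU_odd a b s hs]
      exact intervalIntegral.integral_nonneg h0 (fun u hu => ih u hu.1 (hu.2.trans h1))

lemma UU_int_mono (a b : ℝ) (s : ℕ) (c x y z w : ℝ) (h0 : 0 ≤ x) (h1 : x ≤ y) (h2 : y ≤ z)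
    (h3 : z ≤ w) (h4 : w ≤ a + b + c) :
    ∫ u in y..z, UU a b s c u ≤ ∫ u in x..w, UU a b s c u := by
  apply intervalIntegral.integral_mono_interval h1 h2 h3 _ (UU_ii _ _ _ _ _ _)
  filter_upwards [ae_restrict_mem measurableSet_Ioc] with u hu
  exact UU_nonneg a b s c u (h0.trans hu.1.le) (hu.2.trans h4)

lemma UU_mono_c (a b : ℝ) (s : ℕ) (c d t : ℝ) (hcd : c ≤ d) (h0 : 0 ≤ t) (h1 : t ≤ a + b + c) :
    UU a b s c t ≤ UU a b s d t := by
  induction s generalizing t with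
  | zero => exact le_rfl
  | succ s ih =>
    by_cases hs : Even s
    · rw [UU_even a b s hs, UU_even a b s hs]
      refine (intervalIntegral.integral_mono_on h1 (UU_ii _ _ _ _ _ _) (UU_ii _ _ _ _ _ _)
        (fun u hu => ih u (h0.trans hu.1) hu.2)).trans ?_
      exact UU_int_mono a b s d _ _ _ _ h0 le_rfl h1 (by linarith) le_rfl
    · rw [UU_odd a b s hs, UU_odd a b s hs]
      exact intervalIntegral.integral_mono_on h0 (UU_ii _ _ _ _ _ _) (UU_ii _ _ _ _ _ _)
        (fun u hu => ih u hu.1 (hu.2.trans h1))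

lemma UU_one_mid (a b c t : ℝ) (hc : 0 ≤ c) (h0 : a ≤ t) (h1 : t ≤ a + b) :
    UU a b 1 c t = a + b - t := by
  rw [UU_even a b 0 (by simp)]
  change ∫ x in t..(a + b + c), psiBase a b x = _
  rw [← intervalIntegral.integral_add_adjacent_intervals
    (base_ii a b t (a + b)) (base_ii a b (a + b) (a + b + c))]
  have e1 : ∫ x in t..(a + b), psiBase a b x = ∫ x in t..(a + b), (1:ℝ) := by
    apply intervalIntegral.integral_congr_Ioo_of_le h1
    intro x hx
    simp only [psiBase]
    rw [if_neg (by linarith [hx.1]), if_pos hx.2.le]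
  have e2 : ∫ x in (a + b)..(a + b + c), psiBase a b x = ∫ x in (a + b)..(a + b + c), (0:ℝ) := by
    apply intervalIntegral.integral_congr_Ioo_of_le (by linarith)
    intro x hx
    simp only [psiBase]
    rw [if_neg (by linarith [hx.1]), if_neg (by linarith [hx.1])]
  rw [e1, e2]; simp

lemma UU_one_right (a b c t : ℝ) (hb : 0 ≤ b) (h0 : a + b ≤ t) (h1 : t ≤ a + b + c) :
    UU a b 1 c t = 0 := by
  rw [UU_even a b 0 (by simp)]
  have e2 : ∫ x in t..(a + b + c), psiBase a b x = ∫ x in t..(a + b + c), (0:ℝ) := by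
    apply intervalIntegral.integral_congr_Ioo_of_le (by linarith)
    intro x hx
    simp only [psiBase]
    rw [if_neg (by linarith [hx.1]), if_neg (by linarith [hx.1])]
  exact e2.trans (by simp)

lemma UU_one_left (a b c t : ℝ) (hb : 0 ≤ b) (hc : 0 ≤ c) (h1 : t ≤ a) :
    UU a b 1 c t = b := by
  have h := UU_one_mid a b c a hc le_rfl (by linarith)
  rw [UU_even a b 0 (by simp)] at h ⊢
  rw [← intervalIntegral.integral_add_adjacent_intervals
    (UU_ii a b 0 c t a) (UU_ii a b 0 c a (a + b + c)), h]
  have e2 : ∫ x in t..a, UU a b 0 c x = ∫ x in t..a, (0:ℝ) := by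
    apply intervalIntegral.integral_congr_Ioo_of_le h1
    intro x hx
    simp only [psiBase, UU]
    rw [if_pos hx.2.le]
  rw [e2]; simp

lemma NN_zero (a b c : ℝ) (ha : 0 ≤ a) (hb : 0 ≤ b) (hc : 0 ≤ c) : NN a b 0 c = b := by
  have h := UU_one_left a b c 0 hb hc ha
  rwa [UU_even a b 0 (by simp)] at h

lemma NN_one (a b c : ℝ) (ha : 0 ≤ a) (hb : 0 ≤ b) (hc : 0 ≤ c) :
    NN a b 1 c = b * (a + b / 2) := by
  unfold NN
  rw [← intervalIntegral.integral_add_adjacent_intervals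
    (UU_ii a b 1 c 0 a) (UU_ii a b 1 c a (a + b + c)),
    ← intervalIntegral.integral_add_adjacent_intervals
    (UU_ii a b 1 c a (a + b)) (UU_ii a b 1 c (a + b) (a + b + c))]
  have e1 : ∫ x in (0:ℝ)..a, UU a b 1 c x = ∫ x in (0:ℝ)..a, b := by
    apply intervalIntegral.integral_congr_Ioo_of_le ha
    exact fun x hx => UU_one_left a b c x hb hc hx.2.le
  have e2 : ∫ x in a..(a + b), UU a b 1 c x = ∫ x in a..(a + b), (a + b - x) := by
    apply intervalIntegral.integral_congr_Ioo_of_le (by linarith)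
    exact fun x hx => UU_one_mid a b c x hc hx.1.le hx.2.le
  have e3 : ∫ x in (a + b)..(a + b + c), UU a b 1 c x = ∫ x in (a + b)..(a + b + c), (0 : ℝ) := by
    apply intervalIntegral.integral_congr_Ioo_of_le (by linarith)
    exact fun x hx => UU_one_right a b c x hb hx.1.le hx.2.le
  rw [e1, e2, e3, intervalIntegral.integral_sub (by simp) (by simp), integral_id]
  simp
  ring

lemma UU_pos (a b : ℝ) (ha : 0 ≤ a) (hb : 0 < b) (s : ℕ) (c t : ℝ) (hc : 0 ≤ c) (h0 : 0 < t)
    (h1 : t < a + b + c) : 0 < UU a b (s + 2) c t := by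
  induction s generalizing t with
  | zero =>
    rw [UU_odd a b 1 (by simp)]
    refine intervalIntegral.integral_pos h0 (UU_cont a b 0 c).continuousOn ?_ ⟨0, ⟨le_rfl, h0.le⟩, ?_⟩
    · exact fun x hx => UU_nonneg a b 1 c x hx.1.le (hx.2.trans h1.le)
    · rw [UU_one_left a b c 0 hb.le hc ha]; exact hb
  | succ s ih =>
    by_cases hs : Even (s + 2)
    · rw [show s + 1 + 2 = (s + 2) + 1 by ring, UU_even a b _ hs]
      exact intervalIntegral.intervalIntegral_pos_of_pos_on (UU_ii _ _ _ _ _ _)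
        (fun x hx => ih x (h0.trans hx.1) hx.2) h1
    · rw [show s + 1 + 2 = (s + 2) + 1 by ring, UU_odd a b _ hs]
      exact intervalIntegral.intervalIntegral_pos_of_pos_on (UU_ii _ _ _ _ _ _)
        (fun x hx => ih x hx.1 (hx.2.trans h1)) h0

lemma NN_strictMono (a b : ℝ) (ha : 0 ≤ a) (hb : 0 < b) (s : ℕ) :
    StrictMonoOn (NN a b (s + 2)) (Set.Ici 0) := by
  intro c hc d hd hcd
  simp only [Set.mem_Ici] at hc hd
  unfold NN
  rw [← intervalIntegral.integral_add_adjacent_intervals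
    (UU_ii a b (s + 2) d 0 (a + b + c)) (UU_ii a b (s + 2) d (a + b + c) (a + b + d))]
  have h1 : ∫ x in (0:ℝ)..(a + b + c), UU a b (s + 2) c x ≤
      ∫ x in (0:ℝ)..(a + b + c), UU a b (s + 2) d x :=
    intervalIntegral.integral_mono_on (by linarith) (UU_ii _ _ _ _ _ _) (UU_ii _ _ _ _ _ _)
      (fun u hu => UU_mono_c a b _ c d u hcd.le hu.1 hu.2)
  have h2 : 0 < ∫ x in (a + b + c)..(a + b + d), UU a b (s + 2) d x :=
    intervalIntegral.intervalIntegral_pos_of_pos_on (UU_ii _ _ _ _ _ _)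
      (fun x hx => UU_pos a b ha hb s d x hd (by linarith [hx.1]) hx.2) (by linarith)
  linarith

lemma UU_even_lower (a b : ℝ) (ha : 0 ≤ a) (hb : 0 < b) (s : ℕ) (hs : Even s) :
    ∃ κ > 0, ∀ c, 0 ≤ c → ∀ t, a + b ≤ t → t ≤ a + b + c → κ ≤ UU a b (s + 2) c t := by
  have hs' : ¬ Even (s + 1) := by rw [Nat.even_add_one]; simpa using hs
  refine ⟨UU a b (s + 2) 0 ((a + b) / 2), UU_pos a b ha hb s 0 _ le_rfl (by linarith) (by linarith), ?_⟩
  intro c hc t h0 h1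
  refine (UU_mono_c a b _ 0 c _ hc (by linarith) (by linarith)).trans ?_
  rw [UU_odd a b (s + 1) hs', UU_odd a b (s + 1) hs']
  exact UU_int_mono a b _ c 0 0 _ _ le_rfl le_rfl (by linarith) (by linarith) h1

lemma NN_tendsto (a b : ℝ) (ha : 0 ≤ a) (hb : 0 < b) (s : ℕ) :
    Tendsto (NN a b (s + 2)) atTop atTop := by
  suffices h : ∃ κ > 0, ∀ c, 0 ≤ c → κ * c ≤ NN a b (s + 2) c by
    obtain ⟨κ, hκ, h⟩ := h
    refine tendsto_atTop_mono' _ ?_ (tendsto_id.const_mul_atTop hκ)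
    filter_upwards [eventually_ge_atTop 0] with c hc using h c hc
  have aux : ∀ n, Even n → ∃ κ > 0, ∀ c, 0 ≤ c →
      κ * c ≤ ∫ x in (a + b)..(a + b + c), UU a b (n + 2) c x := by
    intro n hn
    obtain ⟨κ, hκ, h⟩ := UU_even_lower a b ha hb n hn
    refine ⟨κ, hκ, fun c hc => ?_⟩
    have := intervalIntegral.integral_mono_on (μ := volume) (a := a + b) (b := a + b + c)
      (f := fun _ => κ)
      (by linarith) (by simp) (UU_ii a b (n + 2) c _ _) (fun u hu => h c hc u hu.1 hu.2)
    simp at this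
    linarith
  by_cases hs : Even s
  · obtain ⟨κ, hκ, h⟩ := aux s hs
    refine ⟨κ, hκ, fun c hc => (h c hc).trans ?_⟩
    exact UU_int_mono a b _ c 0 _ _ _ le_rfl (by linarith) (by linarith) le_rfl le_rfl
  · cases s with
    | zero => simp at hs
    | succ s =>
      rw [Nat.even_add_one, not_not] at hs
      obtain ⟨κ, hκ, h⟩ := aux s hs
      refine ⟨(a + b) * κ, by positivity, fun c hc => ?_⟩
      have h1 := intervalIntegral.integral_mono_on (μ := volume) (a := 0) (b := a + b)
        (f := fun _ => κ * c) (g := UU a b (s + 1 + 2) c)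
        (by linarith) (by simp) (UU_ii a b _ c _ _) (fun u hu => by
          rw [show s + 1 + 2 = (s + 2) + 1 by ring, UU_even a b (s + 2) (by
            rw [Nat.even_add]; simpa using hs)]
          exact (h c hc).trans (UU_int_mono a b _ c _ _ _ _ hu.1 hu.2 (by linarith) le_rfl le_rfl))
      simp only [intervalIntegral.integral_const, smul_eq_mul, sub_zero] at h1
      have h2 := UU_int_mono a b (s + 1 + 2) c 0 0 (a + b) (a + b + c) le_rfl le_rfl (by linarith)
        (by linarith) le_rfl
      unfold NN
      linarith

lemma psi_eq_UU (a b c : ℝ) (ha : 0 ≤ a) (hb : 0 < b) (hc : 0 ≤ c) (s : ℕ) :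
    ∃ ε : ℝ, |ε| = 1 ∧ ∀ t, 0 ≤ t → t ≤ a + b + c → psi s a b c t = ε * UU a b s c t := by
  have hL : 0 < a + b + c := by linarith
  induction s with
  | zero =>
    refine ⟨1, by simp, fun t h0 h1 => ?_⟩
    simp only [psi, UU, one_mul]
    rw [psiZero_eq a b c t h0 (by linarith), if_pos (by linarith)]
    unfold psiHalf
    rw [if_pos h1]
  | succ s ih =>
    obtain ⟨ε, hε, ih⟩ := ih
    by_cases hs : Even s
    · refine ⟨-ε, by rwa [abs_neg], fun t h0 h1 => ?_⟩
      rw [psi_succ_even a b c ha hL s hs, UU_even a b s hs, intervalIntegral.integral_symm,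
        neg_mul, ← intervalIntegral.integral_const_mul]
      congr 1
      apply intervalIntegral.integral_congr
      intro x hx
      rw [Set.uIcc_of_le h1] at hx
      exact ih x (h0.trans hx.1) hx.2
    · refine ⟨ε, hε, fun t h0 h1 => ?_⟩
      rw [psi_succ_odd a b c ha hL s hs, UU_odd a b s hs, ← intervalIntegral.integral_const_mul]
      apply intervalIntegral.integral_congr
      intro x hx
      rw [Set.uIcc_of_le h0] at hx
      exact ih x hx.1 (hx.2.trans h1)

lemma unif_eq (f : ℝ → ℝ) (m : ℝ) (h : ∀ t, |f t| ≤ m) (t₀ : ℝ) (h0 : |f t₀| = m) :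
    unif f = m := by
  unfold unif
  apply le_antisymm
  · exact ciSup_le h
  · rw [← h0]
    exact le_ciSup (f := fun t => |f t|) ⟨m, by rintro _ ⟨t, rfl⟩; exact h t⟩ t₀

lemma unif_psi (a b c : ℝ) (ha : 0 ≤ a) (hb : 0 < b) (hc : 0 ≤ c) (s : ℕ) (α : ℝ) (hα : 0 ≤ α) :
    unif (fun t => α * psi (s + 1) a b c t) = α * NN a b s c := by
  have hL : 0 < a + b + c := by linarith
  obtain ⟨ε, hε, h⟩ := psi_eq_UU a b c ha hb hc (s + 1)
  have hab : ∀ t, 0 ≤ t → t ≤ a + b + c → |psi (s + 1) a b c t| = UU a b (s + 1) c t := by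
    intro t h0 h1
    rw [h t h0 h1, abs_mul, hε, one_mul, abs_of_nonneg (UU_nonneg a b _ c t h0 h1)]
  have hbd : ∀ t, |α * psi (s + 1) a b c t| ≤ α * NN a b s c := by
    intro t
    rw [abs_mul, abs_of_nonneg hα]
    apply mul_le_mul_of_nonneg_left _ hα
    obtain ⟨u, h0, h1, e⟩ := psi_abs_red a b c ha hL (s + 1) t
    rw [e, hab u h0 h1]
    by_cases hs : Even s
    · rw [UU_even a b s hs]
      exact UU_int_mono a b s c _ _ _ _ le_rfl h0 h1 le_rfl le_rfl
    · rw [UU_odd a b s hs]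
      exact UU_int_mono a b s c _ _ _ _ le_rfl le_rfl h0 h1 le_rfl
  by_cases hs : Even s
  · refine unif_eq _ _ hbd 0 ?_
    rw [abs_mul, abs_of_nonneg hα, hab 0 le_rfl hL.le, UU_even a b s hs]; rfl
  · refine unif_eq _ _ hbd (a + b + c) ?_
    rw [abs_mul, abs_of_nonneg hα, hab _ hL.le le_rfl, UU_odd a b s hs]; rfl

lemma psi_hasDeriv (a b c : ℝ) (s : ℕ) (t : ℝ) (h : ContinuousAt (psi s a b c) t) :
    HasDerivAt (psi (s + 1) a b c) (psi s a b c t) t := by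
  simp only [psi]
  apply HasDerivAt.sub_const
  refine intervalIntegral.integral_hasDerivAt_right (psi_ii s a b c _ _) ?_ h
  cases s with
  | zero => exact (psiZero_meas a b c).stronglyMeasurable.stronglyMeasurableAtFilter
  | succ s => exact (psi_cont s a b c).stronglyMeasurable.stronglyMeasurableAtFilter

lemma iter_psi (a b c α : ℝ) (k s : ℕ) :
    iteratedDeriv k (fun t => α * psi (k + s + 1) a b c t) = fun t => α * psi (s + 1) a b c t := by
  induction k generalizing s with
  | zero => simp
  | succ k ih =>
    rw [iteratedDeriv_succ, show k + 1 + s + 1 = k + (s + 1) + 1 by ring, ih (s + 1)]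
    funext t
    exact ((psi_hasDeriv a b c (s + 1) t (psi_cont s a b c).continuousAt).const_mul α).deriv

lemma M_psi (a b c : ℝ) (ha : 0 ≤ a) (hb : 0 < b) (hc : 0 ≤ c) (k s : ℕ) (α : ℝ) (hα : 0 ≤ α) :
    M k (fun t => α * psi (k + s + 1) a b c t) = α * NN a b s c := by
  unfold M
  rw [iter_psi, unif_psi a b c ha hb hc s α hα]

lemma M_psi_top (a b c : ℝ) (ha : 0 ≤ a) (hb : 0 < b) (hc : 0 ≤ c) (k : ℕ) (α : ℝ) (hα : 0 ≤ α) :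
    M (k + 1) (fun t => α * psi (k + 1) a b c t) = α := by
  unfold M
  rw [iteratedDeriv_succ]
  have := iter_psi a b c α k 0
  rw [add_zero] at this
  rw [this, zero_add]
  have hmid : psi 0 a b c =ᶠ[nhds (a + b / 2)] fun _ => (1:ℝ) := by
    filter_upwards [Ioo_mem_nhds (show a < a + b / 2 by linarith) (show a + b / 2 < a + b by linarith)]
      with t ht
    simp only [psi]
    rw [psiZero_eq a b c t (by linarith [ht.1]) (by linarith [ht.2]), if_pos (by linarith [ht.2])]
    unfold psiHalf psiBase
    rw [if_pos (by linarith [ht.2]), if_neg (by linarith [ht.1]), if_pos ht.2.le]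
  refine unif_eq _ _ ?_ (a + b / 2) ?_
  · intro t
    have hl : LipschitzWith ⟨α, hα⟩ (fun t => α * psi 1 a b c t) := by
      apply LipschitzWith.of_dist_le_mul
      intro x y
      rw [Real.dist_eq, Real.dist_eq, ← mul_sub, abs_mul, abs_of_nonneg hα]
      apply mul_le_mul_of_nonneg_left _ hα
      have e : psi 1 a b c x - psi 1 a b c y = ∫ u in y..x, psi 0 a b c u := by
        simp only [psi]
        rw [sub_sub_sub_cancel_right]
        exact intervalIntegral.integral_interval_sub_left (psi_ii 0 a b c _ _) (psi_ii 0 a b c _ _)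
      rw [e]
      have := intervalIntegral.norm_integral_le_of_norm_le_const (a := y) (b := x)
        (f := psi 0 a b c) (C := 1) (fun u _ => psiZero_bd a b c u)
      simpa using this
    exact norm_deriv_le_of_lipschitz hl
  · have h := (psi_hasDeriv a b c 0 (a + b / 2)
      (continuousAt_const.congr hmid.symm)).const_mul α
    rw [h.deriv, hmid.eq_of_nhds, mul_one, abs_of_nonneg hα]

lemma landau_aux (u v : ℝ → ℝ) (A D : ℝ) (hD : 0 < D) (hu : ∀ t, |u t| ≤ A)
    (huv : ∀ t, HasDerivAt u (v t) t) (hv : ∀ x y, |v x - v y| ≤ D * |x - y|) (t : ℝ)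
    (ht : 0 ≤ v t) : v t ^ 2 ≤ 2 * A * D := by
  set m := v t with hm
  have hF : ∀ h, HasDerivAt (fun h => u (t + h) - u (t - h) - 2 * m * h + D * h ^ 2)
      (v (t + h) + v (t - h) - 2 * m + 2 * D * h) h := by
    intro h
    have h1 : HasDerivAt (fun h => u (t + h)) (v (t + h)) h := (huv (t + h)).comp_const_add t h
    have h2 : HasDerivAt (fun h => u (t - h)) (-v (t - h)) h := (huv (t - h)).comp_const_sub t h
    have h3 := (((h1.sub h2).sub ((hasDerivAt_id h).const_mul (2 * m))).add
      (((hasDerivAt_id h).pow 2).const_mul D))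
    refine (h3.congr_deriv ?_).congr_of_eventuallyEq (Eventually.of_forall fun x => ?_)
    · simp; ring
    · simp
  have hmono : MonotoneOn (fun h => u (t + h) - u (t - h) - 2 * m * h + D * h ^ 2) (Set.Ici 0) := by
    apply monotoneOn_of_deriv_nonneg (convex_Ici 0)
    · exact fun h _ => (hF h).continuousAt.continuousWithinAt
    · exact fun h _ => (hF h).differentiableAt.differentiableWithinAt
    · intro h hh
      rw [interior_Ici, Set.mem_Ioi] at hh
      rw [(hF h).deriv]
      have h1 := (abs_le.1 (hv (t + h) t)).1
      have h2 := (abs_le.1 (hv (t - h) t)).1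
      rw [show t + h - t = h by ring, abs_of_pos hh] at h1
      rw [show t - h - t = -h by ring, abs_neg, abs_of_pos hh] at h2
      linarith
  have h1 := hmono (Set.mem_Ici.2 le_rfl) (Set.mem_Ici.2 (show 0 ≤ m / D by positivity))
    (show 0 ≤ m / D by positivity)
  simp only [add_zero, sub_zero, sub_self, mul_zero] at h1
  have h2 := (abs_le.1 (hu (t + m / D))).2
  have h3 := (abs_le.1 (hu (t - m / D))).1
  have h4 : 2 * m * (m / D) - D * (m / D) ^ 2 = m ^ 2 / D := by field_simp; ring
  have h5 : m ^ 2 / D ≤ 2 * A := by norm_num at h1; linarith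
  rwa [div_le_iff₀ hD] at h5

lemma landau (u v : ℝ → ℝ) (A D : ℝ) (hD : 0 ≤ D) (hu : ∀ t, |u t| ≤ A)
    (huv : ∀ t, HasDerivAt u (v t) t) (hv : ∀ x y, |v x - v y| ≤ D * |x - y|) (t : ℝ) :
    v t ^ 2 ≤ 2 * A * D := by
  have key : ∀ E, D < E → v t ^ 2 ≤ 2 * A * E := by
    intro E hE
    have hv' : ∀ x y, |v x - v y| ≤ E * |x - y| := fun x y =>
      (hv x y).trans (mul_le_mul_of_nonneg_right hE.le (abs_nonneg _))
    rcases le_total 0 (v t) with h | h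
    · exact landau_aux u v A E (hD.trans_lt hE) hu huv hv' t h
    · have := landau_aux (fun t => -u t) (fun t => -v t) A E (hD.trans_lt hE) (by simpa using hu)
        (fun t => (huv t).neg) (fun x y => by
          rw [show -v x - -v y = -(v x - v y) by ring, abs_neg]; exact hv' x y) t (by simpa using h)
      simpa using this
  have hc : Tendsto (fun E => 2 * A * E) (nhdsWithin D (Set.Ioi D)) (nhds (2 * A * D)) :=
    ((continuous_const.mul continuous_id).tendsto D).mono_left nhdsWithin_le_nhds
  refine ge_of_tendsto hc ?_
  filter_upwards [self_mem_nhdsWithin] with E hE using key E hE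

lemma iter_hasDeriv (n : ℕ) (h : ℝ → ℝ) (hc : ContDiff ℝ (n + 1 : ℕ) h) (t : ℝ) :
    HasDerivAt (iteratedDeriv n h) (iteratedDeriv (n + 1) h t) t := by
  rw [iteratedDeriv_succ]
  exact (hc.differentiable_iteratedDeriv n (by exact_mod_cast n.lt_succ_self) t).hasDerivAt

lemma lip_of_bd (w w' : ℝ → ℝ) (C : ℝ) (hC : 0 ≤ C) (hw : ∀ t, HasDerivAt w (w' t) t)
    (h : ∀ t, |w' t| ≤ C) : LipschitzWith ⟨C, hC⟩ w := by
  apply lipschitzWith_of_nnnorm_deriv_le (fun t => (hw t).differentiableAt)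
  intro t
  rw [(hw t).deriv]
  exact h t

lemma bdd_top (n : ℕ) : ∀ h : ℝ → ℝ, ContDiff ℝ (n : ℕ) h → (∃ C, ∀ t, |h t| ≤ C) →
    (∃ K : NNReal, LipschitzWith K (iteratedDeriv n h)) → ∃ B, ∀ t, |iteratedDeriv n h t| ≤ B := by
  induction n with
  | zero => intro h _ hb _; simpa using hb
  | succ n ih =>
    intro h hc ⟨C, hC⟩ ⟨K, hK⟩
    have hcn : ContDiff ℝ (n : ℕ) h := hc.of_le (by exact_mod_cast n.le_succ)
    have hcs : ContDiff ℝ (n : ℕ) (fun t => h (t + 1)) := hcn.comp (by fun_prop)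
    have hd : iteratedDeriv n (fun t => h (t + 1) - h t) =
        fun t => iteratedDeriv n h (t + 1) - iteratedDeriv n h t := by
      funext t
      rw [iteratedDeriv_fun_sub hcs.contDiffAt hcn.contDiffAt, iteratedDeriv_comp_add_const]
    have hw := iter_hasDeriv n h hc
    have hl : ∀ x y, |iteratedDeriv (n + 1) h x - iteratedDeriv (n + 1) h y| ≤ K * |x - y| := by
      intro x y
      have := hK.dist_le_mul x y
      rwa [Real.dist_eq, Real.dist_eq] at this
    obtain ⟨B, hB⟩ := ih (fun t => h (t + 1) - h t) (hcs.sub hcn)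
      ⟨C + C, fun t => (abs_sub _ _).trans (add_le_add (hC _) (hC _))⟩ (by
        rw [hd]
        refine ⟨_, lip_of_bd _ (fun t => iteratedDeriv (n + 1) h (t + 1) - iteratedDeriv (n + 1) h t)
          K K.2 (fun t => ((hw (t + 1)).comp_add_const t 1).sub (hw t)) (fun t => ?_)⟩
        simpa using hl (t + 1) t)
    refine ⟨B + K, fun t => ?_⟩
    obtain ⟨ξ, hξ, e⟩ := exists_hasDerivAt_eq_slope (iteratedDeriv n h) (iteratedDeriv (n + 1) h)
      (show t < t + 1 by linarith) (fun x _ => (hw x).continuousAt.continuousWithinAt)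
      (fun x _ => hw x)
    have h1 := hB t
    rw [hd] at h1
    simp only [add_sub_cancel_left, div_one] at e
    beta_reduce at h1
    rw [← e] at h1
    have h2 := hl t ξ
    have h3 : |t - ξ| ≤ 1 := by rw [abs_le]; constructor <;> linarith [hξ.1, hξ.2]
    have h4 : (K:ℝ) * |t - ξ| ≤ K := mul_le_of_le_one_right K.2 h3
    have h5 := abs_sub_abs_le_abs_sub (iteratedDeriv (n + 1) h t) (iteratedDeriv (n + 1) h ξ)
    linarith

lemma vanish (n : ℕ) (h : ℝ → ℝ) (hc : ContDiff ℝ (n + 1 : ℕ) h) (hb : ∃ C, ∀ t, |h t| ≤ C)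
    (hz : ∀ x y, iteratedDeriv (n + 1) h x = iteratedDeriv (n + 1) h y) : ∀ x y, h x = h y := by
  induction n with
  | zero =>
    obtain ⟨C, hC⟩ := hb
    have hw := iter_hasDeriv 0 h hc
    have h0 : ∀ t, iteratedDeriv 1 h t = 0 := fun t => by
      have := landau (iteratedDeriv 0 h) (iteratedDeriv 1 h) C 0 le_rfl (by simpa using hC)
        hw (fun x y => by rw [hz x y]; simp) t
      nlinarith [sq_nonneg (iteratedDeriv 1 h t)]
    have := is_const_of_deriv_eq_zero (f := h) (fun t => by
      have := (hw t).differentiableAt; rwa [iteratedDeriv_zero] at this)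
      (fun t => by rw [← iteratedDeriv_one]; exact h0 t)
    exact this
  | succ n ih =>
    have hcn : ContDiff ℝ (n + 1 : ℕ) h := hc.of_le (by exact_mod_cast (n + 1).le_succ)
    have hw := iter_hasDeriv (n + 1) h hc
    obtain ⟨B, hB⟩ := bdd_top (n + 1) h hcn hb ⟨_, lip_of_bd _ _ _ (abs_nonneg _) hw
      (fun t => by rw [hz t 0])⟩
    have h0 : ∀ t, iteratedDeriv (n + 1 + 1) h t = 0 := fun t => by
      have := landau _ _ B 0 le_rfl hB hw (fun x y => by rw [hz x y]; simp) t
      nlinarith [sq_nonneg (iteratedDeriv (n + 1 + 1) h t)]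
    exact ih hcn (is_const_of_deriv_eq_zero (fun t => (hw t).differentiableAt)
      (fun t => by rw [(hw t).deriv]; exact h0 t))

lemma le_unif (f : ℝ → ℝ) (h : ∃ B, ∀ t, |f t| ≤ B) (t : ℝ) : |f t| ≤ unif f := by
  obtain ⟨B, hB⟩ := h
  exact le_ciSup (f := fun t => |f t|) ⟨B, by rintro _ ⟨t, rfl⟩; exact hB t⟩ t

lemma unif_nonneg (f : ℝ → ℝ) : 0 ≤ unif f := Real.iSup_nonneg (fun _ => abs_nonneg _)

lemma lip_deriv (v : ℝ → ℝ) (K : NNReal) (hK : LipschitzWith K v) (x y : ℝ) :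
    |v x - v y| ≤ unif (deriv v) * |x - y| := by
  have hac := (hK.lipschitzOnWith (s := Set.uIcc y x)).absolutelyContinuousOnInterval
  rw [← hac.integral_deriv_eq_sub]
  exact intervalIntegral.norm_integral_le_of_norm_le_const (f := deriv v) (C := unif (deriv v))
    (fun u _ => le_unif (deriv v) ⟨K, fun t => norm_deriv_le_of_lipschitz hK⟩ u)

lemma f_facts (n : ℕ) (f : ℝ → ℝ) (hf : MemL (n + 2) f) (hnc : ∃ x y : ℝ, f x ≠ f y) :
    0 < M (n + 2) f ∧ 0 < M (n + 1) f ∧ M (n + 1) f ^ 2 ≤ 2 * M n f * M (n + 2) f := by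
  obtain ⟨_, hb, hc, K, hK⟩ := hf
  rw [show n + 2 - 1 = n + 1 by omega] at hc hK
  have hcn : ContDiff ℝ (n : ℕ) f := hc.of_le (by exact_mod_cast n.le_succ)
  have hw := iter_hasDeriv n f hc
  obtain ⟨Bv, hBv⟩ := bdd_top (n + 1) f hc hb ⟨K, hK⟩
  obtain ⟨Bu, hBu⟩ := bdd_top n f hcn hb ⟨_, lip_of_bd _ _ _ ((abs_nonneg _).trans (hBv 0)) hw hBv⟩
  have hlip := lip_deriv _ K hK
  rw [← iteratedDeriv_succ] at hlip
  change ∀ x y, _ ≤ M (n + 2) f * _ at hlip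
  have hnv : ¬ ∀ x y, iteratedDeriv (n + 1) f x = iteratedDeriv (n + 1) f y := by
    intro h
    obtain ⟨x, y, hxy⟩ := hnc
    exact hxy (vanish n f hc hb h x y)
  have hD : 0 ≤ M (n + 2) f := unif_nonneg _
  refine ⟨lt_of_le_of_ne hD ?_, lt_of_le_of_ne (unif_nonneg _) ?_, ?_⟩
  · intro h
    apply hnv
    intro x y
    have := hlip x y
    rw [← h, zero_mul] at this
    exact sub_eq_zero.1 (abs_nonpos_iff.1 this)
  · intro h
    apply hnv
    have h0 : ∀ t, iteratedDeriv (n + 1) f t = 0 := fun t => by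
      have : |iteratedDeriv (n + 1) f t| ≤ M (n + 1) f := le_unif _ ⟨Bv, hBv⟩ t
      rw [show M (n + 1) f = 0 from h.symm] at this
      exact abs_nonpos_iff.1 this
    intro x y; rw [h0, h0]
  · have h1 := landau _ _ (M n f) (M (n + 2) f) hD (fun t => le_unif _ ⟨Bu, hBu⟩ t) hw hlip
    have h2 : M (n + 1) f ≤ Real.sqrt (2 * M n f * M (n + 2) f) :=
      ciSup_le (fun t => Real.abs_le_sqrt (h1 t))
    have h3 : 0 ≤ 2 * M n f * M (n + 2) f := (sq_nonneg _).trans (h1 0)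
    exact (Real.le_sqrt (unif_nonneg _) h3).1 h2

/-- The one-parameter spline family for `𝐤 = (0,k,r-2,r-1,r)`: for non-constant
`f ∈ L^r_{∞,∞}`, with `α = M_r(f)`, `b = M_{r-1}(f)/M_r(f)` and
`a = M_{r-2}(f)/M_{r-1}(f) - M_{r-1}(f)/(2 M_r(f))` one has `a ≥ 0`, and the splines
`g_β = α ψ_r(a,b,β)` match `M_{r-2}`, `M_{r-1}` and `M_r` of `f`, while for each
`s < r-2` the map `β ↦ M_s(g_β)` continuously increases to `∞`. -/
theorem stmt14 (r : ℕ) (hr : 4 ≤ r) (f : ℝ → ℝ) (hf : MemL r f)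
    (hnc : ∃ x y : ℝ, f x ≠ f y)
    (α b a : ℝ) (hα : α = M r f) (hb : b = M (r - 1) f / M r f)
    (ha : a = M (r - 2) f / M (r - 1) f - M (r - 1) f / (2 * M r f))
    (g : ℝ → ℝ → ℝ) (hg : g = fun β t => α * psi r a b β t) :
    0 ≤ a ∧ 0 < α ∧ 0 < b ∧
    (∀ β : ℝ, 0 ≤ β → M (r - 2) (g β) = M (r - 2) f ∧
      M (r - 1) (g β) = M (r - 1) f ∧ M r (g β) = M r f) ∧
    (∀ s : ℕ, s < r - 2 →
      ContinuousOn (fun β => M s (g β)) (Set.Ici 0) ∧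
      StrictMonoOn (fun β => M s (g β)) (Set.Ici 0) ∧
      Filter.Tendsto (fun β => M s (g β)) Filter.atTop Filter.atTop) := by

  obtain ⟨n, rfl⟩ : ∃ n, r = n + 2 := ⟨r - 2, by omega⟩
  simp only [show n + 2 - 2 = n by omega, show n + 2 - 1 = n + 1 by omega] at *
  obtain ⟨hD, hV, hL⟩ := f_facts n f hf hnc
  have hα0 : 0 < α := hα ▸ hD
  have hb0 : 0 < b := by rw [hb]; positivity
  have ha0 : 0 ≤ a := by
    have : a = (2 * M n f * M (n + 2) f - M (n + 1) f ^ 2) / (2 * M (n + 1) f * M (n + 2) f) := by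
      rw [ha]; field_simp
    rw [this]
    exact div_nonneg (by linarith) (by positivity)
  refine ⟨ha0, hα0, hb0, ?_, ?_⟩
  · intro β hβ
    rw [hg]
    refine ⟨?_, ?_, ?_⟩
    · have := M_psi a b β ha0 hb0 hβ n 1 α hα0.le
      rw [NN_one a b β ha0 hb0.le hβ] at this
      refine this.trans ?_
      rw [ha, hb, hα]
      field_simp
      ring
    · have := M_psi a b β ha0 hb0 hβ (n + 1) 0 α hα0.le
      rw [NN_zero a b β ha0 hb0.le hβ] at this
      refine this.trans ?_
      rw [hb, hα]
      field_simp
    · exact (M_psi_top a b β ha0 hb0 hβ (n + 1) α hα0.le).trans hα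
  · intro s hs
    obtain ⟨k, rfl⟩ : ∃ k, n = s + k + 1 := ⟨n - s - 1, by omega⟩
    have e : ∀ β ∈ Set.Ici (0:ℝ), M s (g β) = α * NN a b (k + 2) β := by
      intro β hβ
      rw [hg]
      exact M_psi a b β ha0 hb0 hβ s (k + 2) α hα0.le
    refine ⟨?_, ?_, ?_⟩
    · exact ((continuous_const.mul (NN_cont a b (k + 1))).continuousOn).congr e
    · intro x hx y hy hxy
      simp only [e x hx, e y hy]
      exact mul_lt_mul_of_pos_left (NN_strictMono a b ha0 hb0 k hx hy hxy) hα0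
    · refine ((NN_tendsto a b ha0 hb0 k).const_mul_atTop hα0).congr' ?_
      filter_upwards [eventually_ge_atTop 0] with β hβ using (e β hβ).symm
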